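/- arXiv:1902.07136 — 3 statements merged into one kernel-verified Lean document; each statement's English description precedes it below -/
import Mathlib

section
/- Let A be the 3 × 9 matrix over GF(4) with rows (1,0,0,1,0,α,α²,α²,α²), (0,1,0,0,1,α,1,α²,α), (0,0,1,1,1,1,0,1,1); its vector matroid is the Pappus matroid. A field F realizes the column matroid of A if and only if F is infinite, has exactly 4 elements, or has at least 7 elements. (Equivalently, the Pappus matroid is representable over a field F if and only if F = GF(4) or |F| ≥ 7.) -/
/-- A field `F` realizes the column matroid of a matrix `A` over `K` if some matrix `B`
over `F` with the same column index set has exactly the same linearly independent sets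
of columns as `A`. -/
def RealizesColumnMatroid {K : Type*} [Field K] {m k : ℕ}
    (A : Matrix (Fin m) (Fin k) K) (F : Type*) [Field F] : Prop :=
  ∃ (n : ℕ) (B : Matrix (Fin n) (Fin k) F),
    ∀ S : Set (Fin k),
      LinearIndependent F (fun j : S => B.transpose (j : Fin k)) ↔
        LinearIndependent K (fun j : S => A.transpose (j : Fin k))

/-!
In a representation of the Pappus matroid the points `0`, `1`, `2` and `8` form a projective
frame. In the coordinates of this frame one parameter places the point `3` on the line `02` and
another places `5` on `08`. Eight of the nine lines then determine the remaining points, and the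
ninth, `367`, comes for free: this is Pappus's theorem. The other triples are noncollinear if and
only if the parameters `s` and `p` satisfy `s ∉ {0, 1}` and `p ∉ {0, 1, 1 - s, 1 / s, s / (s - 1)}`.
Such a choice exists as soon as the field has more than five elements, and no field has exactly six.
In characteristic two `s = p ∉ {0, 1}` is always allowed, which settles the field with four
elements, while no choice exists over the fields with two, three or five elements.
-/

namespace Pappus

open Finset Module Submodule

section LinearIndependence

variable {F ι κ V : Type*} [Field F] [AddCommGroup V] [Module F V]

theorem linearIndepOn_range_iff_det_ne_zero [Fintype κ] [DecidableEq κ] (v : ι → κ → F)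
    {e : κ → ι} (he : Function.Injective e) :
    LinearIndepOn F v (Set.range e) ↔ (Matrix.of (v ∘ e)).det ≠ 0 := by
  rw [linearIndepOn_range_iff he, ← isUnit_iff_ne_zero, ← Matrix.isUnit_iff_isUnit_det,
    ← Matrix.linearIndependent_rows_iff_isUnit]
  rfl

theorem linearIndepOn_triple_iff_det_ne_zero (v : ι → Fin 3 → F) {i j k : ι}
    (hij : i ≠ j) (hik : i ≠ k) (hjk : j ≠ k) :
    LinearIndepOn F v {i, j, k} ↔ (Matrix.of ![v i, v j, v k]).det ≠ 0 := by
  have hinj : Function.Injective ![i, j, k] := by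
    simp [Function.Injective, Fin.forall_fin_succ, hij, hik, hjk, hij.symm, hik.symm, hjk.symm]
  have hrange : Set.range ![i, j, k] = {i, j, k} := by
    simp only [Matrix.range_cons, Matrix.range_empty, Set.union_empty, Set.singleton_union]
  have hrows : v ∘ ![i, j, k] = ![v i, v j, v k] := by
    funext a
    fin_cases a <;> rfl
  rw [← hrange, linearIndepOn_range_iff_det_ne_zero v hinj, hrows]

theorem linearIndepOn_iff_exists_card_eq_finrank [FiniteDimensional F V] {v : ι → V}
    (hv : span F (Set.range v) = ⊤) (S : Set ι) :
    LinearIndepOn F v S ↔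
      ∃ T : Finset ι, S ⊆ T ∧ #T = finrank F V ∧ LinearIndepOn F v (T : Set ι) := by
  refine ⟨fun hS ↦ ?_, fun ⟨T, hST, _, hT⟩ ↦ hT.mono hST⟩
  obtain ⟨b, -, hSb, hspan, hb⟩ := exists_linearIndepOn_extension hS (Set.subset_univ S)
  lift b to Finset ι using hb.finite
  have htop : span F (v '' b) = ⊤ := by
    rw [eq_top_iff, ← hv, span_le, ← Set.image_univ]
    exact hspan
  have hcard : finrank F (span F (v '' b)) = #b := by
    rw [Set.image_eq_range, finrank_span_eq_card hb]
    simp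
  exact ⟨b, hSb, by rw [← hcard, htop, finrank_top], hb⟩

theorem linearIndepOn_rescale_iff {c : ι → F} {r : κ → F} (hc : ∀ j, c j ≠ 0)
    (hr : ∀ i, r i ≠ 0) (v : ι → κ → F) (S : Set ι) :
    LinearIndepOn F (fun j i ↦ c j * r i * v j i) S ↔ LinearIndepOn F v S := by
  let φ : (κ → F) ≃ₗ[F] (κ → F) :=
    LinearEquiv.piCongrRight fun i ↦ LinearEquiv.smulOfNeZero F F (r i) (hr i)
  have hφ : LinearMap.ker (φ : (κ → F) →ₗ[F] (κ → F)) = ⊥ := φ.ker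
  have hfactor : (fun j : S ↦ fun i ↦ c j * r i * v j i) =
      (fun j : S ↦ Units.mk0 (c j) (hc j)) • (φ ∘ fun j : S ↦ v j) := by
    funext j i
    simp [φ, LinearEquiv.smulOfNeZero, LinearEquiv.smulOfUnit, mul_assoc, Units.smul_def]
  unfold LinearIndepOn
  rw [hfactor, LinearIndependent.units_smul_iff]
  exact LinearMap.linearIndependent_iff _ hφ

theorem exists_coordinates_of_mem_span [Finite κ] [DecidableEq κ] {v : ι → V} {e : κ → ι}
    (hli : LinearIndependent F (v ∘ e))
    (hspan : ∀ j, v j ∈ span F (Set.range (v ∘ e))) :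
    ∃ w : ι → κ → F, (∀ i, w (e i) = Pi.single i 1) ∧
      ∀ S, LinearIndepOn F w S ↔ LinearIndepOn F v S := by
  have := Fintype.ofFinite κ
  have hφ := linearIndependent_iff_injective_fintypeLinearCombination.mp hli
  set φ := Fintype.linearCombination F (v ∘ e) with hφdef
  have hrange : ∀ j, ∃ w, φ w = v j := by
    simpa only [← Fintype.range_linearCombination, LinearMap.mem_range] using hspan
  choose w hw using hrange
  refine ⟨w, fun i ↦ hφ ?_, fun S ↦ ?_⟩
  · rw [hw, hφdef, Fintype.linearCombination_apply_single, one_smul, Function.comp_apply]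
  · rw [show v = φ ∘ w from funext fun j ↦ (hw j).symm]
    exact (φ.linearIndepOn_iff_of_injOn hφ.injOn).symm

end LinearIndependence

theorem exists_lt_lt_eq_of_card_eq_three {ι : Type*} [LinearOrder ι] {T : Finset ι}
    (hT : #T = 3) : ∃ i j k, i < j ∧ j < k ∧ T = {i, j, k} := by
  let e := T.orderEmbOfFin hT
  refine ⟨e 0, e 1, e 2, e.strictMono (by decide), e.strictMono (by decide), ?_⟩
  rw [← T.image_orderEmbOfFin_univ hT]
  simp [Fin.univ_succ, e]

/-- The nine lines of the Pappus configuration, on points labelled by the columns of the matrix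
in the theorem. -/
def lines : Finset (Finset (Fin 9)) :=
  {{0, 1, 6}, {0, 2, 3}, {0, 5, 8}, {1, 2, 4}, {1, 7, 8}, {2, 5, 7}, {3, 4, 8}, {3, 6, 7},
    {4, 5, 6}}

/-- A family of nine vectors represents the Pappus matroid, the matroid of rank three whose bases
are the triples other than the nine lines. Independence of arbitrary sets is prescribed, so that
the rank is part of the definition. -/
def IsPappus (F : Type*) {V : Type*} [Field F] [AddCommGroup V] [Module F V]
    (v : Fin 9 → V) : Prop :=
  ∀ S : Set (Fin 9), LinearIndepOn F v S ↔ ∃ T : Finset (Fin 9), S ⊆ T ∧ #T = 3 ∧ T ∉ lines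

section Field

variable {F V : Type*} [Field F] [AddCommGroup V] [Module F V]

theorem IsPappus.congr {W : Type*} [AddCommGroup W] [Module F W] {v : Fin 9 → V} {w : Fin 9 → W}
    (hv : IsPappus F v) (h : ∀ S, LinearIndepOn F w S ↔ LinearIndepOn F v S) : IsPappus F w :=
  fun S ↦ (h S).trans (hv S)

theorem isPappus_rescale_iff {κ : Type*} {c : Fin 9 → F} {r : κ → F} (hc : ∀ j, c j ≠ 0)
    (hr : ∀ i, r i ≠ 0) (v : Fin 9 → κ → F) :
    IsPappus F (fun j i ↦ c j * r i * v j i) ↔ IsPappus F v :=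
  forall_congr' fun S ↦ by rw [linearIndepOn_rescale_iff hc hr]

theorem IsPappus.linearIndepOn_iff_notMem_lines {v : Fin 9 → V} (hv : IsPappus F v)
    {T : Finset (Fin 9)} (hT : #T = 3) : LinearIndepOn F v (T : Set (Fin 9)) ↔ T ∉ lines := by
  rw [hv]
  constructor
  · rintro ⟨T', hTT', hT', hlines⟩
    rwa [eq_of_subset_of_card_le (mod_cast hTT') (hT'.trans hT.symm).le]
  · exact fun hlines ↦ ⟨T, subset_rfl, hT, hlines⟩

theorem IsPappus.card_le_three {v : Fin 9 → V} (hv : IsPappus F v) {T : Finset (Fin 9)}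
    (hT : LinearIndepOn F v (T : Set (Fin 9))) : #T ≤ 3 := by
  obtain ⟨T', hTT', hT', -⟩ := (hv T).mp hT
  exact hT' ▸ card_le_card (mod_cast hTT')

theorem IsPappus.mem_span_image {v : Fin 9 → V} (hv : IsPappus F v) {T : Finset (Fin 9)}
    (hT : #T = 3) (hlines : T ∉ lines) (j : Fin 9) : v j ∈ span F (v '' T) := by
  by_contra hj
  have hindep := (hv.linearIndepOn_iff_notMem_lines hT).mpr hlines
  have hjT : j ∉ T := fun h ↦ hj (subset_span (Set.mem_image_of_mem v h))
  have hle := hv.card_le_three (T := insert j T) (by simpa using hindep.insert hj)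
  rw [card_insert_of_notMem hjT] at hle
  omega

theorem IsPappus.det_eq_zero_iff {v : Fin 9 → Fin 3 → F} (hv : IsPappus F v) {i j k : Fin 9}
    (hij : i < j) (hjk : j < k) :
    (Matrix.of ![v i, v j, v k]).det = 0 ↔ {i, j, k} ∈ lines := by
  have hik := hij.trans hjk
  rw [← not_iff_not, ← hv.linearIndepOn_iff_notMem_lines
    (card_eq_three.mpr ⟨i, j, k, hij.ne, hik.ne, hjk.ne, rfl⟩)]
  simpa using (linearIndepOn_triple_iff_det_ne_zero v hij.ne hik.ne hjk.ne).symm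

theorem IsPappus.det_ne_zero {v : Fin 9 → Fin 3 → F} (hv : IsPappus F v) (i j k : Fin 9)
    (hij : i < j := by decide) (hjk : j < k := by decide) (hl : {i, j, k} ∉ lines := by decide) :
    (Matrix.of ![v i, v j, v k]).det ≠ 0 :=
  fun h ↦ hl ((hv.det_eq_zero_iff hij hjk).mp h)

theorem isPappus_of_det_eq_zero_iff {v : Fin 9 → Fin 3 → F}
    (hv : ∀ i j k, i < j → j < k →
      ((Matrix.of ![v i, v j, v k]).det = 0 ↔ {i, j, k} ∈ lines)) : IsPappus F v := by
  have hbasis : ∀ T : Finset (Fin 9), #T = 3 →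
      (LinearIndepOn F v (T : Set (Fin 9)) ↔ T ∉ lines) := by
    intro T hT
    obtain ⟨i, j, k, hij, hjk, rfl⟩ := exists_lt_lt_eq_of_card_eq_three hT
    rw [← hv i j k hij hjk]
    simpa using linearIndepOn_triple_iff_det_ne_zero v hij.ne (hij.trans hjk).ne hjk.ne
  have hspan : span F (Set.range v) = ⊤ := by
    have hindep := (hbasis {0, 1, 2} rfl).mpr (by decide)
    have htop := hindep.span_eq_top_of_card_eq_finrank' (by simp)
    rw [← Set.image_eq_range] at htop
    exact top_le_iff.mp (htop ▸ span_mono (Set.image_subset_range v _))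
  intro S
  rw [linearIndepOn_iff_exists_card_eq_finrank hspan, finrank_fin_fun]
  exact exists_congr fun T ↦ and_congr_right' (and_congr_right (hbasis T))

end Field

/-- Nine points depending on two parameters, in coordinates where `0`, `1`, `2` and `8` form the
standard projective frame. The point `3` is on the line `02`, and `5` is on the line `08`; the
other points are then determined by the incidences of the Pappus configuration. -/
def normalForm {R : Type*} [CommRing R] (s p : R) : Fin 9 → Fin 3 → R :=
  ![![1, 0, 0], ![0, 1, 0], ![0, 0, 1], ![1, 0, s], ![0, 1, 1 - s], ![p, 1, 1],
    ![p * (s - 1), s, 0], ![p, 1, p], ![1, 1, 1]]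

/-- The parameters for which `normalForm s p` has no collinear triples besides the Pappus lines.
Over a field with `s ≠ 0, 1`, the conditions on `p` exclude `0`, `1`, `1 - s`, `1 / s` and
`s / (s - 1)`. -/
def IsAdmissible {R : Type*} [CommRing R] (s p : R) : Prop :=
  s ≠ 0 ∧ s ≠ 1 ∧ p ≠ 0 ∧ p ≠ 1 ∧ s + p ≠ 1 ∧ p * s ≠ 1 ∧ p * (s - 1) ≠ s

section NormalForm

variable {F : Type*} [Field F]

-- Up to sign, the determinant of a triple that is not a line is `1` or a product of factors among
-- `s`, `s - 1`, `p`, `p - 1`, `s + p - 1`, `p * s - 1` and `p * (s - 1) - s`.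
theorem det_normalForm_eq_zero_iff {s p : F} (h : IsAdmissible s p) {i j k : Fin 9}
    (hij : i < j) (hjk : j < k) :
    (Matrix.of ![normalForm s p i, normalForm s p j, normalForm s p k]).det = 0 ↔
      {i, j, k} ∈ lines := by
  obtain ⟨hs0, hs1, hp0, hp1, hsp, hps, hps'⟩ := h
  simp only [Matrix.det_fin_three, Matrix.of_apply, Matrix.cons_val]
  fin_cases i <;> fin_cases j <;> first
  | exact absurd hij (by decide)
  | fin_cases k <;> first
    | exact absurd hjk (by decide)
    | refine iff_of_true ?_ (by decide)
      simp only [normalForm, Fin.zero_eta, Fin.mk_one, Fin.reduceFinMk, Matrix.cons_val]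
      ring
    | refine iff_of_false ?_ (by decide)
      simp only [normalForm, Fin.zero_eta, Fin.mk_one, Fin.reduceFinMk, Matrix.cons_val]
      grind

theorem isPappus_normalForm {s p : F} (h : IsAdmissible s p) : IsPappus F (normalForm s p) :=
  isPappus_of_det_eq_zero_iff fun _ _ _ ↦ det_normalForm_eq_zero_iff h

theorem isAdmissible_of_isPappus_normalForm {s p : F} (h : IsPappus F (normalForm s p)) :
    IsAdmissible s p := by
  have h013 := h.det_ne_zero 0 1 3
  have h014 := h.det_ne_zero 0 1 4
  have h125 := h.det_ne_zero 1 2 5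
  have h258 := h.det_ne_zero 2 5 8
  have h047 := h.det_ne_zero 0 4 7
  have h135 := h.det_ne_zero 1 3 5
  have h268 := h.det_ne_zero 2 6 8
  simp only [Matrix.det_fin_three, normalForm, Matrix.of_apply, Matrix.cons_val]
    at h013 h014 h125 h258 h047 h135 h268
  refine ⟨?_, ?_, ?_, ?_, ?_, ?_, ?_⟩ <;> grind

end NormalForm

section Necessity

variable {F V : Type*} [Field F] [AddCommGroup V] [Module F V]

theorem IsPappus.exists_coordinates {v : Fin 9 → V} (hv : IsPappus F v) :
    ∃ w : Fin 9 → Fin 3 → F, w 0 = ![1, 0, 0] ∧ w 1 = ![0, 1, 0] ∧ w 2 = ![0, 0, 1] ∧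
      IsPappus F w := by
  let e : Fin 3 → Fin 9 := ![0, 1, 2]
  have hinj : Function.Injective e := by decide
  have hrange : Set.range e = (({0, 1, 2} : Finset (Fin 9)) : Set (Fin 9)) := by
    simp only [e, Matrix.range_cons, Matrix.range_empty, Set.union_empty, Set.singleton_union,
      coe_insert, coe_singleton]
  have hli : LinearIndependent F (v ∘ e) := by
    rw [← linearIndepOn_range_iff hinj, hrange, hv.linearIndepOn_iff_notMem_lines rfl]
    decide
  have hspan (j) : v j ∈ span F (Set.range (v ∘ e)) := by
    rw [Set.range_comp, hrange]
    exact hv.mem_span_image rfl (by decide) j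
  obtain ⟨w, hwe, hw⟩ := exists_coordinates_of_mem_span hli hspan
  refine ⟨w, ?_, ?_, ?_, hv.congr hw⟩
  · exact (hwe 0).trans (by ext i; fin_cases i <;> rfl)
  · exact (hwe 1).trans (by ext i; fin_cases i <;> rfl)
  · exact (hwe 2).trans (by ext i; fin_cases i <;> rfl)

theorem IsPappus.det_eq_zero {v : Fin 9 → Fin 3 → F} (hv : IsPappus F v) (i j k : Fin 9)
    (hij : i < j := by decide) (hjk : j < k := by decide) (hl : {i, j, k} ∈ lines := by decide) :
    (Matrix.of ![v i, v j, v k]).det = 0 :=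
  (hv.det_eq_zero_iff hij hjk).mpr hl

theorem IsPappus.apply_eq_zero_iff {w : Fin 9 → Fin 3 → F} (hw : IsPappus F w)
    (h0 : w 0 = ![1, 0, 0]) (h1 : w 1 = ![0, 1, 0]) (h2 : w 2 = ![0, 0, 1]) {j : Fin 9}
    (hj : 2 < j) : (w j 0 = 0 ↔ {1, 2, j} ∈ lines) ∧ (w j 1 = 0 ↔ {0, 2, j} ∈ lines) ∧
      (w j 2 = 0 ↔ {0, 1, j} ∈ lines) := by
  have h1j : 1 < j := lt_trans (by decide) hj
  rw [← hw.det_eq_zero_iff (by decide) hj, ← hw.det_eq_zero_iff (by decide) hj,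
    ← hw.det_eq_zero_iff (by decide) h1j]
  simp [Matrix.det_fin_three, h0, h1, h2]

theorem IsPappus.line_equations {w : Fin 9 → Fin 3 → F} (hw : IsPappus F w)
    (h0 : w 0 = ![1, 0, 0]) (h1 : w 1 = ![0, 1, 0]) (h2 : w 2 = ![0, 0, 1]) :
    w 6 2 = 0 ∧ w 3 1 = 0 ∧ w 4 0 = 0 ∧
      w 5 1 * w 8 2 = w 5 2 * w 8 1 ∧
      w 7 2 * w 8 0 = w 7 0 * w 8 2 ∧
      w 5 0 * w 7 1 = w 5 1 * w 7 0 ∧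
      w 3 0 * w 4 1 * w 8 2 = w 3 0 * w 4 2 * w 8 1 + w 3 2 * w 4 1 * w 8 0 ∧
      w 4 1 * w 5 2 * w 6 0 + w 4 2 * w 5 0 * w 6 1 = w 4 2 * w 5 1 * w 6 0 := by
  obtain ⟨h016, h023, h124⟩ : w 6 2 = 0 ∧ w 3 1 = 0 ∧ w 4 0 = 0 := by
    simp (disch := decide) only [hw.apply_eq_zero_iff h0 h1 h2]
    decide
  have h058 := hw.det_eq_zero 0 5 8
  have h178 := hw.det_eq_zero 1 7 8
  have h257 := hw.det_eq_zero 2 5 7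
  have h348 := hw.det_eq_zero 3 4 8
  have h456 := hw.det_eq_zero 4 5 6
  simp only [Matrix.det_fin_three, Matrix.of_apply, Matrix.cons_val, h0, h1, h2, h016, h023, h124]
    at h058 h178 h257 h348 h456
  refine ⟨h016, h023, h124, ?_, ?_, ?_, ?_, ?_⟩
  · linear_combination h058
  · linear_combination h178
  · linear_combination h257
  · linear_combination h348
  · linear_combination h456

-- The entries `1` and `s` of the normal form force the parameters and the scaling factors; the
-- line equations then give the remaining entries.
theorem IsPappus.exists_rescale_normalForm {w : Fin 9 → Fin 3 → F} (hw : IsPappus F w)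
    (h0 : w 0 = ![1, 0, 0]) (h1 : w 1 = ![0, 1, 0]) (h2 : w 2 = ![0, 0, 1]) :
    ∃ (s p : F) (c : Fin 9 → F) (r : Fin 3 → F), (∀ j, c j ≠ 0) ∧ (∀ i, r i ≠ 0) ∧
      w = fun j i ↦ c j * r i * normalForm s p j i := by
  obtain ⟨h62, h31, h40, h058, h178, h257, h348, h456⟩ := hw.line_equations h0 h1 h2
  obtain ⟨h30, h32, h41, h51, h61, h71, h80, h81, h82⟩ : w 3 0 ≠ 0 ∧ w 3 2 ≠ 0 ∧ w 4 1 ≠ 0 ∧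
      w 5 1 ≠ 0 ∧ w 6 1 ≠ 0 ∧ w 7 1 ≠ 0 ∧ w 8 0 ≠ 0 ∧ w 8 1 ≠ 0 ∧ w 8 2 ≠ 0 := by
    simp (disch := decide) only [ne_eq, hw.apply_eq_zero_iff h0 h1 h2]
    decide
  obtain ⟨s, hs⟩ : ∃ s, s = w 3 2 * w 8 0 / (w 3 0 * w 8 2) := ⟨_, rfl⟩
  obtain ⟨p, hp⟩ : ∃ p, p = w 5 0 * w 8 1 / (w 8 0 * w 5 1) := ⟨_, rfl⟩
  have hs0 : s ≠ 0 := by simp [hs, h30, h32, h80, h82]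
  have h32' : w 3 2 = w 3 0 / w 8 0 * w 8 2 * s := by rw [hs]; field_simp
  have h42 : w 4 2 = w 4 1 / w 8 1 * w 8 2 * (1 - s) := by
    rw [hs]; field_simp; linear_combination -h348
  have h50 : w 5 0 = w 5 1 / w 8 1 * w 8 0 * p := by rw [hp]; field_simp
  have h52 : w 5 2 = w 5 1 / w 8 1 * w 8 2 := by
    field_simp; linear_combination -h058
  have h60 : w 6 0 = w 6 1 / (w 8 1 * s) * w 8 0 * (p * (s - 1)) := by
    rw [hs, hp]; field_simp; grind
  have h70 : w 7 0 = w 7 1 / w 8 1 * w 8 0 * p := by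
    rw [hp]; field_simp; linear_combination -h257
  have h72 : w 7 2 = w 7 1 / w 8 1 * w 8 2 * p := by
    rw [hp]; field_simp; grind
  refine ⟨s, p, ![1 / w 8 0, 1 / w 8 1, 1 / w 8 2, w 3 0 / w 8 0, w 4 1 / w 8 1, w 5 1 / w 8 1,
    w 6 1 / (w 8 1 * s), w 7 1 / w 8 1, 1], w 8, ?_, ?_, ?_⟩
  · simp [Fin.forall_fin_succ, hs0, h30, h41, h51, h61, h71, h80, h81, h82]
  · simp [Fin.forall_fin_succ, h80, h81, h82]
  · funext j i
    fin_cases j <;> fin_cases i <;>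
      simp only [normalForm, Fin.zero_eta, Fin.mk_one, Fin.reduceFinMk, Matrix.cons_val, h0, h1, h2,
        h31, h40, h62, mul_zero, mul_one, one_mul] <;>
      first | assumption | field_simp

theorem IsPappus.exists_isAdmissible {v : Fin 9 → V} (hv : IsPappus F v) :
    ∃ s p : F, IsAdmissible s p := by
  obtain ⟨w, h0, h1, h2, hw⟩ := hv.exists_coordinates
  obtain ⟨s, p, c, r, hc, hr, rfl⟩ := hw.exists_rescale_normalForm h0 h1 h2
  exact ⟨s, p, isAdmissible_of_isPappus_normalForm ((isPappus_rescale_iff hc hr _).mp hw)⟩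

end Necessity

section Parameters

theorem isAdmissible_map_iff {R S : Type*} [CommRing R] [CommRing S] {f : R →+* S}
    (hf : Function.Injective f) {s p : R} : IsAdmissible (f s) (f p) ↔ IsAdmissible s p := by
  simp only [IsAdmissible, ← map_one f, ← map_mul, ← map_add, ← map_sub, hf.ne_iff,
    map_ne_zero_iff f hf]

theorem not_isAdmissible_zmod {q : ℕ} (hq : q ∈ ({2, 3, 5} : Set ℕ)) (s p : ZMod q) :
    ¬ IsAdmissible s p := by
  rcases hq with rfl | rfl | rfl <;> revert s p <;> unfold IsAdmissible <;> decide

theorem exists_notMem_of_card_lt_enatCard {ι : Type*} {X : Finset ι} (h : #X < ENat.card ι) :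
    ∃ a, a ∉ X := by
  contrapose! h
  rw [← Set.encard_univ, ← Set.encard_coe_eq_coe_finsetCard]
  exact Set.encard_le_encard fun a _ ↦ h a

variable {F : Type*} [Field F]

theorem isAdmissible_self_of_charTwo [CharP F 2] {a : F} (ha0 : a ≠ 0) (ha1 : a ≠ 1) :
    IsAdmissible a a := by
  have hsq : a * a ≠ 1 := by
    rw [Ne, mul_self_eq_one_iff, CharTwo.neg_eq, or_self]
    exact ha1
  have hsub : a * (a - 1) ≠ a := by
    rw [Ne, mul_eq_left₀ ha0, CharTwo.sub_eq_add]
    simpa using ha0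
  exact ⟨ha0, ha1, ha0, ha1, by simp [CharTwo.add_self_eq_zero], hsq, hsub⟩

theorem exists_isAdmissible_of_five_lt_card (hF : 5 < ENat.card F) :
    ∃ s p : F, IsAdmissible s p := by
  classical
  have exists_notMem (X : Finset F) (hX : #X ≤ 5) : ∃ a, a ∉ X :=
    exists_notMem_of_card_lt_enatCard (lt_of_le_of_lt (mod_cast hX) hF)
  obtain ⟨s, hs⟩ := exists_notMem {0, 1} (card_le_two.trans (by norm_num))
  obtain ⟨p, hp⟩ := exists_notMem {0, 1, 1 - s, s⁻¹, s / (s - 1)} card_le_five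
  simp only [mem_insert, mem_singleton, not_or] at hs hp
  obtain ⟨hs0, hs1⟩ := hs
  obtain ⟨hp0, hp1, hp, hps, hps'⟩ := hp
  exact ⟨s, p, hs0, hs1, hp0, hp1, fun h ↦ hp (eq_sub_of_add_eq' h),
    fun h ↦ hps (eq_inv_of_mul_eq_one_left h),
    fun h ↦ hps' (eq_div_of_mul_eq (sub_ne_zero.mpr hs1) h)⟩

theorem exists_isAdmissible_of_card_eq_four (h : Nat.card F = 4) :
    ∃ s p : F, IsAdmissible s p := by
  classical
  have : Finite F := Nat.finite_of_card_ne_zero (by omega)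
  have := Fintype.ofFinite F
  rw [Nat.card_eq_fintype_card] at h
  have : CharP F 2 := charP_of_card_eq_prime_pow (f := 2) h
  obtain ⟨a, -, ha⟩ := exists_mem_notMem_of_card_lt_card (s := ({0, 1} : Finset F)) (t := univ)
    (by rw [card_univ, h]; exact card_le_two.trans_lt (by norm_num))
  simp only [mem_insert, mem_singleton, not_or] at ha
  exact ⟨a, a, isAdmissible_self_of_charTwo ha.1 ha.2⟩

theorem not_isAdmissible_of_card_mem [Fintype F] (hF : Fintype.card F ∈ ({2, 3, 5} : Set ℕ))
    (s p : F) : ¬ IsAdmissible s p := by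
  have hprime : (Fintype.card F).Prime := by
    rcases hF with h | h | h <;> rw [h] <;> norm_num
  let e : F ≃+* ZMod (Fintype.card F) := (ZMod.ringEquivOfPrime F hprime rfl).symm
  rw [← isAdmissible_map_iff (f := (e : F →+* ZMod (Fintype.card F))) e.injective]
  exact not_isAdmissible_zmod hF _ _

theorem exists_isAdmissible_iff :
    (∃ s p : F, IsAdmissible s p) ↔ Infinite F ∨ Nat.card F = 4 ∨ 7 ≤ Nat.card F := by
  constructor
  · rintro ⟨s, p, h⟩
    refine or_iff_not_imp_left.mpr fun hinf ↦ ?_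
    have : Finite F := not_infinite_iff_finite.mp hinf
    have := Fintype.ofFinite F
    rw [Nat.card_eq_fintype_card]
    by_contra! hcard
    have hsmall : Fintype.card F ∉ ({2, 3, 5} : Set ℕ) :=
      fun hF ↦ not_isAdmissible_of_card_mem hF s p h
    have hsix : Fintype.card F ≠ 6 := by
      intro hF
      have hpow := hF ▸ FiniteField.isPrimePow_card F
      exact absurd hpow (by decide)
    have hone : 1 < Fintype.card F := Fintype.one_lt_card
    simp only [Set.mem_insert_iff, Set.mem_singleton_iff] at hsmall
    omega
  · rintro (h | h | h)
    · exact exists_isAdmissible_of_five_lt_card (by simpa using ENat.natCast_lt_top 5)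
    · exact exists_isAdmissible_of_card_eq_four h
    · have : Finite F := Nat.finite_of_card_ne_zero (by omega)
      refine exists_isAdmissible_of_five_lt_card ?_
      rw [ENat.card_eq_coe_natCard]
      exact_mod_cast (by omega : 5 < Nat.card F)

end Parameters

section Realizability

variable {K : Type*} [Field K]

theorem realizesColumnMatroid_iff {m : ℕ} {A : Matrix (Fin m) (Fin 9) K}
    (hA : IsPappus K A.transpose) (F : Type*) [Field F] :
    RealizesColumnMatroid A F ↔ ∃ s p : F, IsAdmissible s p := by
  constructor
  · rintro ⟨n, B, hB⟩
    exact IsPappus.exists_isAdmissible (v := B.transpose) fun S ↦ (hB S).trans (hA S)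
  · rintro ⟨s, p, h⟩
    exact ⟨3, (Matrix.of (normalForm s p)).transpose,
      fun S ↦ (isPappus_normalForm h S).trans (hA S).symm⟩

theorem isPappus_quaternary [CharP K 2] {α : K} (hα : α ^ 2 = α + 1) :
    IsPappus K (!![1, 0, 0, 1, 0, α, α ^ 2, α ^ 2, α ^ 2;
        0, 1, 0, 0, 1, α, 1, α ^ 2, α;
        0, 0, 1, 1, 1, 1, 0, 1, 1] : Matrix (Fin 3) (Fin 9) K).transpose := by
  have hα0 : α ≠ 0 := by rintro rfl; simp at hα
  have hα1 : α ^ 2 ≠ 1 := by simpa [hα] using hα0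
  have hadm : IsAdmissible (α ^ 2) (α ^ 2) :=
    isAdmissible_self_of_charTwo (pow_ne_zero 2 hα0) hα1
  have hpappus := (isPappus_rescale_iff (c := ![α, α ^ 2, 1, α, α ^ 2, 1, 1, α, 1])
    (r := ![α ^ 2, α, 1]) (by simp [Fin.forall_fin_succ, hα0]) (by simp [Fin.forall_fin_succ, hα0])
    _).mpr (isPappus_normalForm hadm)
  refine (congrArg (IsPappus K) (funext₂ fun j i ↦ ?_)).mpr hpappus
  fin_cases j <;> fin_cases i <;> simp [normalForm] <;> grind

end Realizability

end Pappus

theorem stmt_9_general {K : Type*} [Field K] [CharP K 2] (α : K) (hα : α ^ 2 = α + 1)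
    (F : Type*) [Field F] :
    RealizesColumnMatroid
      (!![1, 0, 0, 1, 0, α, α ^ 2, α ^ 2, α ^ 2;
          0, 1, 0, 0, 1, α, 1, α ^ 2, α;
          0, 0, 1, 1, 1, 1, 0, 1, 1] : Matrix (Fin 3) (Fin 9) K) F ↔
      (Infinite F ∨ Nat.card F = 4 ∨ 7 ≤ Nat.card F) :=
  (Pappus.realizesColumnMatroid_iff (Pappus.isPappus_quaternary hα) F).trans
    Pappus.exists_isAdmissible_iff

/-- A field `F` realizes the Pappus matroid iff `F` is infinite, has exactly 4 elements,
or has at least 7 elements. -/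
theorem stmt_9 (α : GaloisField 2 2) (hα : α ^ 2 = α + 1) (F : Type*) [Field F] :
    RealizesColumnMatroid
      (!![1, 0, 0, 1, 0, α, α ^ 2, α ^ 2, α ^ 2;
          0, 1, 0, 0, 1, α, 1, α ^ 2, α;
          0, 0, 1, 1, 1, 1, 0, 1, 1] :
        Matrix (Fin 3) (Fin 9) (GaloisField 2 2)) F ↔
      (Infinite F ∨ Nat.card F = 4 ∨ 7 ≤ Nat.card F) :=
  stmt_9_general α hα F
end

section
/- Let A be the 3 × 9 matrix over GF(4) with rows (0,1,1,1,1,1,0,0,0), (0,1,α,0,0,0,1,1,1), (1,0,0,1,α,α²,1,α,α²); its vector matroid is the matroid P₁. Then: (i) no field of characteristic 3 realizes the column matroid of A; (ii) for every prime p ≠ 3 there exists a field of characteristic p that realizes the column matroid of A; and (iii) there exists a field of characteristic 0 that realizes the column matroid of A. (That is, the characteristic set of P₁ is (𝒫 − {3}) ∪ {0}, where 𝒫 is the set of primes.) -/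
/-- The matrix over `GF(4)` whose vector matroid is `P₁`. -/
noncomputable def P1Matrix (α : GaloisField 2 2) : Matrix (Fin 3) (Fin 9) (GaloisField 2 2) :=
  !![0, 1, 1, 1, 1, 1, 0, 0, 0;
     0, 1, α, 0, 0, 0, 1, 1, 1;
     1, 0, 0, 1, α, α ^ 2, 1, α, α ^ 2]

/-!
If the column matroid of an `m × k` matrix `A` of rank `m` is realized over a field, then it is
realized by an `m × k` matrix, in which the columns of a chosen basis of the matroid are the
standard unit vectors. So a realization amounts to a matrix whose maximal minors vanish exactly
where those of `A` do.

Changing signs, `P1Matrix α` becomes a matrix that makes sense for every primitive cube root of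
unity `ω`. Its maximal minors are the images of Eisenstein integers which are `0` or divide `3`;
hence which of them vanish does not depend on the field.

Conversely, in any realization the incidences force the cross-ratio `ζ` of the four lines that join
the point `0` to the points `3`, `6`, `1`, `2` of the projective plane to satisfy
`ζ ^ 2 + ζ + 1 = 0`, while `ζ ≠ 1` because `0`, `1`, `2` are not collinear. So `P₁` is representable
over `F` if and only if `F` contains a primitive cube root of unity.
-/

open Matrix

theorem det_submatrix_update_of_submatrix_eq_one {R κ ι : Type*} [CommRing R] [Fintype κ]
    [DecidableEq κ] {C : Matrix κ ι R} {b : κ → ι} (hC : C.submatrix id b = 1) (i : κ) (j : ι) :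
    (C.submatrix id (Function.update b i j)).det = C i j := by
  have hupdate : C.submatrix id (Function.update b i j) =
      (1 : Matrix κ κ R).updateCol i (C.col j) := by
    rw [← hC]
    ext r s
    by_cases hs : s = i <;> simp [hs]
  rw [hupdate, ← cramer_apply, cramer_one]
  rfl

section MaximalMinors

variable {K F ι : Type*} [Field K] [Field F]

theorem mem_span_image_of_linearIndepOn_iff {V W : Type*} [AddCommGroup V] [Module K V]
    [AddCommGroup W] [Module F W] {v : ι → V} {w : ι → W}
    (hwv : ∀ S : Set ι, LinearIndepOn F w S ↔ LinearIndepOn K v S) {s : Set ι}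
    (hs : LinearIndepOn K v s) {j : ι} (hj : v j ∈ Submodule.span K (v '' s)) :
    w j ∈ Submodule.span F (w '' s) := by
  by_cases hjs : j ∈ s
  · exact Submodule.subset_span (Set.mem_image_of_mem w hjs)
  · by_contra hspan
    have hinsert : LinearIndepOn K v (insert j s) := (hwv _).1 (((hwv s).2 hs).insert hspan)
    exact ((linearIndepOn_insert hjs).1 hinsert).2 hj

variable {κ : Type*} [Fintype κ] [DecidableEq κ]

theorem linearIndependent_col_comp_iff_det_ne_zero (A : Matrix κ ι K) (f : κ → ι) :
    LinearIndependent K (A.col ∘ f) ↔ (A.submatrix id f).det ≠ 0 := by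
  rw [← isUnit_iff_ne_zero, ← isUnit_iff_isUnit_det, ← linearIndependent_cols_iff_isUnit]
  rfl

theorem injective_of_det_submatrix_ne_zero {A : Matrix κ ι K} {f : κ → ι}
    (hf : (A.submatrix id f).det ≠ 0) : Function.Injective f :=
  ((linearIndependent_col_comp_iff_det_ne_zero A f).2 hf).injective.of_comp

theorem linearIndepOn_col_range_of_det_ne_zero {A : Matrix κ ι K} {f : κ → ι}
    (hf : (A.submatrix id f).det ≠ 0) : LinearIndepOn K A.col (Set.range f) :=
  (linearIndepOn_range_iff (injective_of_det_submatrix_ne_zero hf) A.col).2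
    ((linearIndependent_col_comp_iff_det_ne_zero A f).2 hf)

theorem span_col_image_range_eq_top {A : Matrix κ ι K} {f : κ → ι}
    (hf : (A.submatrix id f).det ≠ 0) : Submodule.span K (A.col '' Set.range f) = ⊤ := by
  rw [← Set.range_comp]
  exact ((linearIndependent_col_comp_iff_det_ne_zero A f).2 hf).span_eq_top_of_card_eq_finrank'
    (by simp)

theorem linearIndepOn_col_iff_exists_det_ne_zero {A : Matrix κ ι K} {g : κ → ι}
    (hg : (A.submatrix id g).det ≠ 0) (S : Set ι) :
    LinearIndepOn K A.col S ↔ ∃ f : κ → ι, S ⊆ Set.range f ∧ (A.submatrix id f).det ≠ 0 := by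
  constructor
  · intro hS
    obtain ⟨b, -, hSb, hspan, hb⟩ := exists_linearIndepOn_extension hS (Set.subset_univ S)
    have htop : ⊤ ≤ Submodule.span K (Set.range fun j : b => A.col j) := by
      rw [← Set.image_eq_range, ← span_col_image_range_eq_top hg, Submodule.span_le]
      exact (Set.image_mono (Set.subset_univ _)).trans hspan
    let e : κ ≃ b := (Pi.basisFun K κ).indexEquiv (Module.Basis.mk hb htop)
    refine ⟨fun i => e i, fun x hx => ⟨e.symm ⟨x, hSb hx⟩, by simp⟩, ?_⟩
    exact (linearIndependent_col_comp_iff_det_ne_zero A _).1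
      (LinearIndependent.comp hb e e.injective)
  · rintro ⟨f, hSf, hf⟩
    exact (linearIndepOn_col_range_of_det_ne_zero hf).mono hSf

variable {m k : ℕ}

theorem RealizesColumnMatroid.of_det_ne_zero_iff {A : Matrix (Fin m) (Fin k) K}
    {B : Matrix (Fin m) (Fin k) F}
    (hBA : ∀ f : Fin m → Fin k, (B.submatrix id f).det ≠ 0 ↔ (A.submatrix id f).det ≠ 0)
    {g : Fin m → Fin k} (hg : (A.submatrix id g).det ≠ 0) :
    RealizesColumnMatroid A F := by
  refine ⟨m, B, fun S => ?_⟩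
  change LinearIndepOn F B.col S ↔ LinearIndepOn K A.col S
  simp only [linearIndepOn_col_iff_exists_det_ne_zero hg,
    linearIndepOn_col_iff_exists_det_ne_zero ((hBA g).2 hg), hBA]

theorem RealizesColumnMatroid.exists_submatrix_eq_one {A : Matrix (Fin m) (Fin k) K}
    (hA : RealizesColumnMatroid A F) {b : Fin m → Fin k} (hb : (A.submatrix id b).det ≠ 0) :
    ∃ C : Matrix (Fin m) (Fin k) F, C.submatrix id b = 1 ∧
      ∀ f : Fin m → Fin k, (C.submatrix id f).det ≠ 0 ↔ (A.submatrix id f).det ≠ 0 := by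
  obtain ⟨n, B, hB⟩ := hA
  have hBA (S : Set (Fin k)) : LinearIndepOn F B.col S ↔ LinearIndepOn K A.col S := hB S
  have hBA_comp {f : Fin m → Fin k} (hf : Function.Injective f) :
      LinearIndependent F (B.col ∘ f) ↔ LinearIndependent K (A.col ∘ f) := by
    rw [← linearIndepOn_range_iff hf, hBA, linearIndepOn_range_iff hf]
  have hBb : LinearIndependent F (B.col ∘ b) :=
    (hBA_comp (injective_of_det_submatrix_ne_zero hb)).2
      ((linearIndependent_col_comp_iff_det_ne_zero A b).2 hb)
  have hspan (j : Fin k) : B.col j ∈ Submodule.span F (Set.range (B.col ∘ b)) := by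
    rw [Set.range_comp]
    refine mem_span_image_of_linearIndepOn_iff hBA (linearIndepOn_col_range_of_det_ne_zero hb) ?_
    exact span_col_image_range_eq_top hb ▸ trivial
  let T : (Fin m → F) →ₗ[F] (Fin n → F) := Fintype.linearCombination F (B.col ∘ b)
  have hT : Function.Injective T := hBb.fintypeLinearCombination_injective
  choose c hc using fun j => (Submodule.mem_span_range_iff_exists_fun F).1 (hspan j)
  have hTc : T ∘ c = B.col := funext hc
  have hcb (i : Fin m) : c (b i) = Pi.single i 1 := hT <| by
    rw [Fintype.linearCombination_apply_single, one_smul]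
    exact hc (b i)
  refine ⟨(of c)ᵀ, ?_, fun f => ?_⟩
  · ext i j
    simp [hcb, Matrix.one_apply, Pi.single_apply]
  · by_cases hf : Function.Injective f
    · rw [← linearIndependent_col_comp_iff_det_ne_zero A, ← hBA_comp hf, ← hTc,
        ← linearIndependent_col_comp_iff_det_ne_zero]
      exact (T.linearIndependent_iff (LinearMap.ker_eq_bot.2 hT)).symm
    · exact iff_of_false (hf ∘ injective_of_det_submatrix_ne_zero)
        (hf ∘ injective_of_det_submatrix_ne_zero)

end MaximalMinors

theorem isPrimitiveRoot_three_iff {R : Type*} [CommRing R] [IsDomain R] {ζ : R} :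
    IsPrimitiveRoot ζ 3 ↔ ζ ≠ 1 ∧ ζ ^ 2 + ζ + 1 = 0 := by
  constructor
  · intro hζ
    refine ⟨hζ.ne_one (by norm_num), ?_⟩
    have hsum := hζ.geom_sum_eq_zero (by norm_num)
    simp only [Finset.sum_range_succ, Finset.sum_range_zero] at hsum
    linear_combination hsum
  · rintro ⟨hne, hζ⟩
    rw [IsPrimitiveRoot.iff_orderOf]
    exact orderOf_eq_prime (by linear_combination (ζ - 1) * hζ) hne

/-- A form of the matrix of `P₁` that is valid in every characteristic: over a field, the column
matroid is `P₁` when `ω` is a primitive cube root of unity. The signs in the last three columns,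
invisible in characteristic `2`, make the columns `3 + i`, `6 + i` and `1` linearly dependent. -/
def cubeRootMatrix {R : Type*} [CommRing R] (ω : R) : Matrix (Fin 3) (Fin 9) R :=
  !![0, 1, 1, 1, 1, 1, 0, 0, 0;
     0, 1, ω, 0, 0, 0, 1, 1, 1;
     1, 0, 0, 1, ω, ω ^ 2, -1, -ω, -ω ^ 2]

theorem cubeRootMatrix_eq_P1Matrix (α : GaloisField 2 2) : cubeRootMatrix α = P1Matrix α := by
  simp [P1Matrix, cubeRootMatrix, CharTwo.neg_eq]

theorem map_cubeRootMatrix {R S : Type*} [CommRing R] [CommRing S] (φ : R →+* S) (ω : R) :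
    (cubeRootMatrix ω).map φ = cubeRootMatrix (φ ω) := by
  ext i j
  fin_cases i <;> fin_cases j <;> simp [cubeRootMatrix]

section Minors

/-- The ring `ℤ[ω]` of Eisenstein integers, `ω ^ 2 = -1 - ω`. The representation by pairs of
integers makes the minors of `cubeRootMatrix ω` computable. -/
abbrev EisensteinInt : Type := QuadraticAlgebra ℤ (-1) (-1)

/-- The maximal minors of `cubeRootMatrix ω` over the Eisenstein integers. -/
def eisensteinMinor (f : Fin 3 → Fin 9) : EisensteinInt :=
  ((cubeRootMatrix (QuadraticAlgebra.omega : EisensteinInt)).submatrix id f).det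

theorem eisensteinMinor_eq_zero_or_norm_dvd_three (f : Fin 3 → Fin 9) :
    eisensteinMinor f = 0 ∨ QuadraticAlgebra.norm (eisensteinMinor f) ∣ 3 := by
  revert f
  simp only [eisensteinMinor, Matrix.det_fin_three, Matrix.submatrix_apply, id]
  decide +kernel

theorem eisensteinMinor_eq_zero_or_dvd_three (f : Fin 3 → Fin 9) :
    eisensteinMinor f = 0 ∨ eisensteinMinor f ∣ 3 := by
  refine (eisensteinMinor_eq_zero_or_norm_dvd_three f).imp_right fun hdvd => ?_
  calc eisensteinMinor f
      ∣ algebraMap ℤ EisensteinInt (QuadraticAlgebra.norm (eisensteinMinor f)) :=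
        ⟨_, QuadraticAlgebra.algebraMap_norm_eq_mul_star _⟩
    _ ∣ algebraMap ℤ EisensteinInt 3 := map_dvd _ hdvd
    _ = 3 := map_ofNat _ 3

variable {K F : Type*} [Field K] [Field F]

theorem det_submatrix_cubeRootMatrix_ne_zero_iff {ω : F} (hω : IsPrimitiveRoot ω 3)
    (f : Fin 3 → Fin 9) :
    ((cubeRootMatrix ω).submatrix id f).det ≠ 0 ↔ eisensteinMinor f ≠ 0 := by
  have hroot : ω * ω = (-1 : ℤ) • (1 : F) + (-1 : ℤ) • ω := by
    simp only [neg_smul, one_smul]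
    linear_combination (isPrimitiveRoot_three_iff.1 hω).2
  let φ : EisensteinInt →+* F := (QuadraticAlgebra.lift ⟨ω, hroot⟩ : EisensteinInt →ₐ[ℤ] F)
  have hφω : φ QuadraticAlgebra.omega = ω := by simp [φ]
  have hφdet : φ (eisensteinMinor f) = ((cubeRootMatrix ω).submatrix id f).det := by
    rw [eisensteinMinor, RingHom.map_det, RingHom.mapMatrix_apply, ← submatrix_map,
      map_cubeRootMatrix, hφω]
  have hthree : (3 : F) ≠ 0 := mod_cast hω.neZero'.out
  rw [← hφdet]
  refine ⟨ne_of_apply_ne φ ∘ (by simpa using ·), fun hne => ?_⟩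
  have hdvd := (eisensteinMinor_eq_zero_or_dvd_three f).resolve_left hne
  exact ne_zero_of_dvd_ne_zero (by rwa [map_ofNat]) (map_dvd φ hdvd)

theorem realizesColumnMatroid_cubeRootMatrix {ω : K} {ζ : F} (hω : IsPrimitiveRoot ω 3)
    (hζ : IsPrimitiveRoot ζ 3) : RealizesColumnMatroid (cubeRootMatrix ω) F := by
  have hminors (f : Fin 3 → Fin 9) : ((cubeRootMatrix ζ).submatrix id f).det ≠ 0 ↔
      ((cubeRootMatrix ω).submatrix id f).det ≠ 0 := by
    rw [det_submatrix_cubeRootMatrix_ne_zero_iff hζ, det_submatrix_cubeRootMatrix_ne_zero_iff hω]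
  have hbasis : ((cubeRootMatrix ω).submatrix id ![3, 6, 0]).det ≠ 0 :=
    (det_submatrix_cubeRootMatrix_ne_zero_iff hω _).2 (by decide)
  exact .of_det_ne_zero_iff hminors hbasis

end Minors

section CrossRatio

variable {F : Type*} [Field F]

/-- The equalities are collinearities of the points `1 = (a₁, b₁, 0)`, `2 = (a₂, b₂, c₂)`,
`3 = (1, 0, 0)`, `4 = (1, 0, x)`, `5 = (1, 0, y)`, `6 = (0, 1, 0)`, `7 = (0, 1, z)` and
`8 = (0, 1, w)`. The fraction is the cross-ratio of the lines from `0 = (0, 0, 1)` to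
`3`, `6`, `1`, `2`. -/
theorem sq_add_self_add_one_eq_zero_of_collinear {a₁ b₁ a₂ b₂ c₂ x y z w : F}
    (h147 : a₁ * x + b₁ * z = 0) (h158 : a₁ * y + b₁ * w = 0) (h246 : c₂ = a₂ * x)
    (h238 : c₂ = b₂ * w) (h257 : c₂ = a₂ * y + b₂ * z)
    (ha₂ : a₂ ≠ 0) (hb₁ : b₁ ≠ 0) (hy : y ≠ 0) :
    (a₁ * b₂ / (b₁ * a₂)) ^ 2 + a₁ * b₂ / (b₁ * a₂) + 1 = 0 := by
  have hx : x = -(a₁ * b₂ / (b₁ * a₂)) * y := by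
    field_simp
    linear_combination b₂ * h158 + b₁ * (h238 - h246)
  have hxy : y = (a₁ * b₂ / (b₁ * a₂) + 1) * x := by
    field_simp
    linear_combination -b₂ * h147 + b₁ * (h246 - h257)
  refine (mul_eq_zero_iff_right hy).1 ?_
  linear_combination hxy + (a₁ * b₂ / (b₁ * a₂) + 1) * hx

theorem apply_eq_zero_iff_eisensteinMinor_update_eq_zero {C : Matrix (Fin 3) (Fin 9) F}
    (hstd : C.submatrix id ![3, 6, 0] = 1)
    (hC : ∀ f, (C.submatrix id f).det = 0 ↔ eisensteinMinor f = 0) (i : Fin 3) (j : Fin 9) :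
    C i j = 0 ↔ eisensteinMinor (Function.update ![3, 6, 0] i j) = 0 := by
  rw [← hC, det_submatrix_update_of_submatrix_eq_one hstd]

theorem exists_isPrimitiveRoot_three_of_det_eq_zero_iff {C : Matrix (Fin 3) (Fin 9) F}
    (hstd : C.submatrix id ![3, 6, 0] = 1)
    (hC : ∀ f, (C.submatrix id f).det = 0 ↔ eisensteinMinor f = 0) :
    ∃ ζ : F, IsPrimitiveRoot ζ 3 := by
  have hentry := apply_eq_zero_iff_eisensteinMinor_update_eq_zero hstd hC
  have hC3 (i : Fin 3) : C i 3 = (1 : Matrix (Fin 3) (Fin 3) F) i 0 := congr_fun₂ hstd i 0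
  have hC6 (i : Fin 3) : C i 6 = (1 : Matrix (Fin 3) (Fin 3) F) i 1 := congr_fun₂ hstd i 1
  have hC0 (i : Fin 3) : C i 0 = (1 : Matrix (Fin 3) (Fin 3) F) i 2 := congr_fun₂ hstd i 2
  obtain ⟨h21, h14, h15, h07, h08⟩ :
      C 2 1 = 0 ∧ C 1 4 = 0 ∧ C 1 5 = 0 ∧ C 0 7 = 0 ∧ C 0 8 = 0 := by
    simp only [hentry]
    decide
  obtain ⟨h02, h11, h04, h05, h25, h17, h18⟩ :
      C 0 2 ≠ 0 ∧ C 1 1 ≠ 0 ∧ C 0 4 ≠ 0 ∧ C 0 5 ≠ 0 ∧ C 2 5 ≠ 0 ∧ C 1 7 ≠ 0 ∧ C 1 8 ≠ 0 := by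
    simp only [ne_eq, hentry]
    decide
  have h147 := (hC ![1, 4, 7]).2 (by decide)
  have h158 := (hC ![1, 5, 8]).2 (by decide)
  have h246 := (hC ![2, 4, 6]).2 (by decide)
  have h238 := (hC ![2, 3, 8]).2 (by decide)
  have h257 := (hC ![2, 5, 7]).2 (by decide)
  have h012 := (hC ![0, 1, 2]).not.2 (by decide)
  simp only [det_fin_three, submatrix_apply, id, cons_val, hC0, hC3, hC6, one_apply, Fin.reduceEq,
    ↓reduceIte, h21, h14, h15, h07, h08] at h147 h158 h246 h238 h257 h012
  refine ⟨C 0 1 * C 1 2 / (C 1 1 * C 0 2), isPrimitiveRoot_three_iff.2 ⟨?_, ?_⟩⟩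
  · rw [ne_eq, div_eq_one_iff_eq (mul_ne_zero h11 h02)]
    contrapose h012
    linear_combination h012
  · refine sq_add_self_add_one_eq_zero_of_collinear (c₂ := C 2 2) (x := C 2 4 / C 0 4)
      (y := C 2 5 / C 0 5) (z := C 2 7 / C 1 7) (w := C 2 8 / C 1 8) ?_ ?_ ?_ ?_ ?_ h02 h11
      (div_ne_zero h25 h05) <;> field_simp
    · linear_combination -h147
    · linear_combination -h158
    · linear_combination h246
    · linear_combination h238
    · linear_combination h257

end CrossRatio

theorem realizesColumnMatroid_cubeRootMatrix_iff {K F : Type*} [Field K] [Field F] {ω : K}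
    (hω : IsPrimitiveRoot ω 3) :
    RealizesColumnMatroid (cubeRootMatrix ω) F ↔ ∃ ζ : F, IsPrimitiveRoot ζ 3 := by
  refine ⟨fun hF => ?_, fun ⟨ζ, hζ⟩ => realizesColumnMatroid_cubeRootMatrix hω hζ⟩
  have hminor := det_submatrix_cubeRootMatrix_ne_zero_iff hω
  obtain ⟨C, hstd, hC⟩ := hF.exists_submatrix_eq_one (b := ![3, 6, 0]) ((hminor _).2 (by decide))
  exact exists_isPrimitiveRoot_three_of_det_eq_zero_iff hstd fun f =>
    not_iff_not.1 ((hC f).trans (hminor f))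

theorem isPrimitiveRoot_three_of_sq_eq_add_one {R : Type*} [CommRing R] [IsDomain R]
    [CharP R 2] {α : R} (hα : α ^ 2 = α + 1) : IsPrimitiveRoot α 3 := by
  have htwo : (2 : R) = 0 := CharTwo.two_eq_zero
  refine isPrimitiveRoot_three_iff.2 ⟨?_, by linear_combination hα + (α + 1) * htwo⟩
  rintro rfl
  exact one_ne_zero (by linear_combination -hα : (1 : R) = 0)

/-- The characteristic set of the matroid `P₁` is `(𝒫 − {3}) ∪ {0}`: no field of
characteristic 3 realizes it, while for every prime `p ≠ 3` some field of
characteristic `p` realizes it, and some field of characteristic 0 realizes it. -/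
theorem stmt_12 (α : GaloisField 2 2) (hα : α ^ 2 = α + 1) :
    (∀ (F : Type) [Field F], CharP F 3 → ¬ RealizesColumnMatroid (P1Matrix α) F) ∧
    (∀ p : ℕ, p.Prime → p ≠ 3 →
      ∃ (F : Type) (_ : Field F), CharP F p ∧ RealizesColumnMatroid (P1Matrix α) F) ∧
    (∃ (F : Type) (_ : Field F), CharP F 0 ∧ RealizesColumnMatroid (P1Matrix α) F) := by
  have hrealizes (F : Type) [Field F] :
      RealizesColumnMatroid (P1Matrix α) F ↔ ∃ ζ : F, IsPrimitiveRoot ζ 3 :=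
    cubeRootMatrix_eq_P1Matrix α ▸
      realizesColumnMatroid_cubeRootMatrix_iff (isPrimitiveRoot_three_of_sq_eq_add_one hα)
  refine ⟨fun F _ _ => ?_, fun p hp hp3 => ?_, ?_⟩
  · rw [hrealizes]
    rintro ⟨ζ, hζ⟩
    exact hζ.neZero'.out (CharP.cast_eq_zero F 3)
  · have : Fact p.Prime := ⟨hp⟩
    have : NeZero ((3 : ℕ) : ZMod p) := ⟨fun h3 => hp3 <|
      (Nat.prime_dvd_prime_iff_eq hp Nat.prime_three).1 ((ZMod.natCast_eq_zero_iff 3 p).1 h3)⟩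
    exact ⟨AlgebraicClosure (ZMod p), inferInstance, inferInstance, (hrealizes _).2
      (HasEnoughRootsOfUnity.exists_primitiveRoot _ 3)⟩
  · exact ⟨ℂ, inferInstance, inferInstance, (hrealizes ℂ).2
      ⟨_, Complex.isPrimitiveRoot_exp 3 three_ne_zero⟩⟩
end

section
/- Let P₀ be the 5 × 6 matrix over GF(4) with rows (1,1,α,α,α,α²), (α,α,α,α,α²,α), (α,α,1,1,1,1), (1,0,1,0,0,0), (0,1,0,1,0,0), and let A = [I₅ | D₅ | P₀] be the 5 × 21 matrix over GF(4) obtained by placing the 5 × 5 identity matrix, the matrix D₅, and P₀ side by side. A field F realizes the column matroid of A if and only if F contains an element z with z² = z + 1. (The universal partial field of this matroid is the golden-mean partial field 𝔾.) -/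
/-- The matrix `[I₅ | D₅ | P₀]` over `GF(4)`, where `D₅` is the (mod-2) signed incidence
matrix of `K₅` and `P₀` is matrix `I` of the paper. -/
noncomputable def matI5D5P0 (α : GaloisField 2 2) :
    Matrix (Fin 5) (Fin 21) (GaloisField 2 2) :=
  !![1, 0, 0, 0, 0,  1, 1, 1, 1, 0, 0, 0, 0, 0, 0,  1, 1, α, α, α, α ^ 2;
     0, 1, 0, 0, 0,  1, 0, 0, 0, 1, 1, 1, 0, 0, 0,  α, α, α, α, α ^ 2, α;
     0, 0, 1, 0, 0,  0, 1, 0, 0, 1, 0, 0, 1, 1, 0,  α, α, 1, 1, 1, 1;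
     0, 0, 0, 1, 0,  0, 0, 1, 0, 0, 1, 0, 1, 0, 1,  1, 0, 1, 0, 0, 0;
     0, 0, 0, 0, 1,  0, 0, 0, 1, 0, 0, 1, 0, 1, 1,  0, 1, 0, 1, 0, 0]

/-!
The matrix `[I₅ | D₅ | P₀]` is the reduction, along `ω ↦ α`, of a matrix over `ℤ[ω]`,
`ω ^ 2 = ω + 1`, all of whose maximal minors are `0` or units. Every ring homomorphism from `ℤ[ω]`
to a field preserves the vanishing and the nonvanishing of these minors, so all the images of the
matrix in fields represent the same matroid; such a homomorphism to `F` exists as soon as `F` has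
a root of `z ^ 2 = z + 1`.

Conversely, a representation of this matroid over `F` can be normalized so that the columns of `I₅`
are the standard basis and the nonzero entries of the first column of `P₀` are `1`. A few
dependencies among the columns then determine the ratio of the two nonzero entries of the
first column of `D₅` up to the equation `z ^ 2 = z + 1`.
-/

open Matrix QuadraticAlgebra Submodule

section Unimodular

variable {R : Type*} [CommRing R] {m : Type*} [Fintype m] [DecidableEq m] {n : ℕ}

/-- A set of vectors in `R ^ m` is unimodular if every determinant with rows in it is `0` or a
unit. This is the condition that a matrix over the partial field `(R, Rˣ)` imposes on its set of
columns. -/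
def IsUnimodular (X : Set (m → R)) : Prop :=
  ∀ A : Matrix m m R, (∀ i, A.row i ∈ X) → A.det = 0 ∨ IsUnit A.det

/-- The coordinates, with respect to the standard basis vectors other than `i`, of the image of
`v` in the quotient of `R ^ (n + 1)` by the line spanned by a vector `c` with `c i = 1`. -/
def pivot (i : Fin (n + 1)) (c v : Fin (n + 1) → R) : Fin n → R :=
  fun r ↦ v (i.succAbove r) - v i * c (i.succAbove r)

theorem IsUnimodular.of_forall_exists_unit_smul_mem {X Y : Set (m → R)} (hY : IsUnimodular Y)
    (h : ∀ v ∈ X, ∃ u : Rˣ, u • v ∈ Y) : IsUnimodular X := by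
  intro A hA
  choose u hu using fun i ↦ h _ (hA i)
  have hdet : (of fun i j ↦ (u i : R) * A i j).det = (↑(∏ i, u i) : R) * A.det := by
    rw [det_mul_column, Units.coe_prod]
  simpa only [hdet, Units.mul_right_eq_zero, Units.isUnit_units_mul] using
    hY (of fun i j ↦ (u i : R) * A i j) hu

theorem IsUnimodular.insert_zero {X : Set (m → R)} (hX : IsUnimodular X) :
    IsUnimodular (insert 0 X) := by
  intro A hA
  by_cases h : ∃ i, A.row i = 0
  · obtain ⟨i, hi⟩ := h
    exact .inl (det_eq_zero_of_row_eq_zero i (congrFun hi))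
  · exact hX A fun i ↦ (hA i).resolve_left (not_exists.mp h i)

theorem pivot_self {i : Fin (n + 1)} {c : Fin (n + 1) → R} (hc : c i = 1) : pivot i c c = 0 := by
  ext r
  simp [pivot, hc]

theorem det_eq_det_pivot (A : Matrix (Fin (n + 1)) (Fin (n + 1)) R) {k i : Fin (n + 1)}
    (hki : A k i = 1) :
    A.det = (-1) ^ (k + i : ℕ) * (of fun r ↦ pivot i (A k) (A (k.succAbove r))).det := by
  let B : Matrix (Fin (n + 1)) (Fin (n + 1)) R :=
    of fun r s ↦ if r = k then A r s else A r s - A r i * A k s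
  have hAB : A.det = B.det :=
    det_eq_of_forall_row_eq_smul_add_const (fun r ↦ if r = k then 0 else A r i) k (by simp)
      fun r s ↦ by by_cases hr : r = k <;> simp [B, hr]
  have hB : ∀ r ≠ k, B r i = 0 := fun r hr ↦ by simp [B, hr, hki]
  have hminor : B.submatrix k.succAbove i.succAbove =
      of fun r ↦ pivot i (A k) (A (k.succAbove r)) := by
    ext r s
    simp [B, pivot, Fin.succAbove_ne]
  rw [hAB, det_succ_column B i, Finset.sum_eq_single k (fun r _ hr ↦ by simp [hB r hr])
    (by simp), hminor]
  simp [B, hki]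

theorem IsUnimodular.insert_of_pivot {X : Set (Fin (n + 1) → R)} {i : Fin (n + 1)}
    {c : Fin (n + 1) → R} (hc : c i = 1) (hX : IsUnimodular X)
    (hpivot : IsUnimodular (pivot i c '' X)) : IsUnimodular (insert c X) := by
  intro A hA
  by_cases h : ∃ k, A.row k = c
  · obtain ⟨k, rfl⟩ := h
    have hrows (r : Fin n) :
        pivot i (A k) (A (k.succAbove r)) ∈ insert 0 (pivot i (A k) '' X) := by
      rcases hA (k.succAbove r) with hr | hr
      · exact .inl ((congrArg (pivot i (A k)) hr).trans (pivot_self hc))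
      · exact .inr ⟨_, hr, rfl⟩
    have hunit : IsUnit ((-1 : R) ^ (k + i : ℕ)) := isUnit_one.neg.pow _
    simpa only [det_eq_det_pivot A hc, hunit.mul_right_eq_zero, IsUnit.mul_iff, hunit,
      true_and] using
      hpivot.insert_zero (of fun r ↦ pivot i (A k) (A (k.succAbove r))) hrows
  · exact hX A fun k ↦ (hA k).resolve_left (not_exists.mp h k)

variable [DecidableEq R]

/-- Scales `v` so that its first invertible entry becomes `1`. The function `inv` serves as an
inversion on units: an entry `x` counts as invertible when `inv x * x = 1`. -/
def normalizeVec (inv : R → R) (v : Fin n → R) : Fin n → R :=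
  match (List.finRange n).find? fun i ↦ inv (v i) * v i = 1 with
  | none => v
  | some i => inv (v i) • v

/-- A decision procedure for unimodularity by recursive pivoting: each vector of the list is
pivoted out of the later ones, up to scaling by units and repetition. The function
`FinVec.etaExpand` is the identity; it lets the kernel share the evaluated entries. -/
def checkUnimodular (inv : R → R) : ∀ n, List (Fin n → R) → Bool
  | 0, _ => true
  | n + 1, l => l.tails.all fun
    | [] => true
    | c :: t => match (List.finRange (n + 1)).find? (c · = 1) with
      | none => c = 0
      | some i => checkUnimodular inv n (t.map fun v ↦
          FinVec.etaExpand (normalizeVec inv (FinVec.etaExpand (pivot i c v)))).dedup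

theorem exists_unit_smul_eq_normalizeVec (inv : R → R) (v : Fin n → R) :
    ∃ u : Rˣ, u • v = normalizeVec inv v := by
  unfold normalizeVec
  split
  · exact ⟨1, one_smul _ v⟩
  · next i hi =>
    have hinv : inv (v i) * v i = 1 := by simpa using List.find?_some hi
    exact ⟨.mkOfMulEqOne _ _ hinv, rfl⟩

theorem isUnimodular_of_checkUnimodular (inv : R → R) :
    ∀ {n : ℕ} {l : List (Fin n → R)}, checkUnimodular inv n l → IsUnimodular {v | v ∈ l}
  | 0, _, _ => fun A _ ↦ .inr (by simp)
  | n + 1, [], _ => fun A hA ↦ absurd (hA 0) (by simp)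
  | n + 1, c :: t, h => by
    rw [checkUnimodular, List.tails, List.all_cons, Bool.and_eq_true] at h
    obtain ⟨hhead, htail⟩ := h
    have ht : IsUnimodular {v | v ∈ t} := isUnimodular_of_checkUnimodular inv htail
    have hcons : {v | v ∈ c :: t} = insert c {v | v ∈ t} := by ext; simp
    rw [hcons]
    dsimp only at hhead
    split at hhead
    · rw [of_decide_eq_true hhead]
      exact ht.insert_zero
    · next i hi =>
      have hci : c i = 1 := by simpa using List.find?_some hi
      refine ht.insert_of_pivot hci
        ((isUnimodular_of_checkUnimodular inv hhead).of_forall_exists_unit_smul_mem ?_)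
      rintro _ ⟨v, hv, rfl⟩
      obtain ⟨u, hu⟩ := exists_unit_smul_eq_normalizeVec inv (pivot i c v)
      refine ⟨u, ?_⟩
      simp only [Set.mem_ofPred_eq, List.mem_dedup, List.mem_map, FinVec.etaExpand_eq, hu]
      exact ⟨v, hv, rfl⟩

end Unimodular

section BaseChange

variable {R R' m ι : Type*} [CommRing R] [CommRing R']

theorem comp_mem_span_of_mem_span (φ : R →+* R') {X : Set (m → R)} {v : m → R}
    (hv : v ∈ span R X) : φ ∘ v ∈ span R' ((φ ∘ ·) '' X) := by
  let f : (m → R) →ₛₗ[φ] (m → R') :=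
    { toFun := (φ ∘ ·)
      map_add' := fun u v ↦ funext fun i ↦ map_add φ (u i) (v i)
      map_smul' := fun r v ↦ funext fun i ↦ map_mul φ r (v i) }
  have hle : span R X ≤ (span R' ((φ ∘ ·) '' X)).comap f :=
    span_le.mpr fun v hv ↦ subset_span ⟨v, hv, rfl⟩
  exact hle hv

theorem span_map_col_eq_top [Finite m] (φ : R →+* R') {M : Matrix m ι R}
    (hM : span R (Set.range M.col) = ⊤) : span R' (Set.range (M.map φ).col) = ⊤ := by
  classical
  rw [eq_top_iff, ← (Pi.basisFun R' m).span_eq, span_le]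
  rintro _ ⟨i, rfl⟩
  have hsingle : φ ∘ Pi.single i 1 = Pi.basisFun R' m i := by
    ext j
    simp [Pi.single_apply, apply_ite φ]
  have hi : φ ∘ Pi.single i 1 ∈ span R' ((φ ∘ ·) '' Set.range M.col) :=
    comp_mem_span_of_mem_span φ (hM ▸ mem_top)
  rwa [hsingle, ← Set.range_comp] at hi

variable {K L : Type*} [Field K] [Field L] [Fintype m] [DecidableEq m]

theorem IsUnimodular.linearIndependent_of_map {A : Matrix m m R} {X : Set (m → R)}
    (hX : IsUnimodular X) (hA : ∀ i, A.row i ∈ X) (φ : R →+* K) (ψ : R →+* L)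
    (h : LinearIndependent K (A.map φ).row) : LinearIndependent L (A.map ψ).row := by
  rw [linearIndependent_rows_iff_isUnit, isUnit_iff_isUnit_det, ← RingHom.mapMatrix_apply,
    ← RingHom.map_det] at h ⊢
  have hdet : A.det ≠ 0 := fun h0 ↦ h.ne_zero (by rw [h0, map_zero])
  exact ((hX A hA).resolve_left hdet).map ψ

/- Extend `S` to a basis of columns: being a basis is detected by a determinant, which is a unit
of `R` as soon as it is nonzero over `K`. -/
theorem IsUnimodular.linearIndepOn_map_col {M : Matrix m ι R}
    (hM : IsUnimodular (Set.range M.col)) (hspan : span R (Set.range M.col) = ⊤)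
    (φ : R →+* K) (ψ : R →+* L) {S : Set ι} (hS : LinearIndepOn K (M.map φ).col S) :
    LinearIndepOn L (M.map ψ).col S := by
  obtain ⟨T, -, hST, hcol, hT⟩ := exists_linearIndepOn_extension hS (Set.subset_univ S)
  have hTspan : ⊤ ≤ span K (Set.range fun t : T ↦ (M.map φ).col t) := by
    rw [← span_map_col_eq_top φ hspan, span_le, ← Set.image_univ, ← Set.image_eq_range]
    exact hcol
  let e : m ≃ T := (Pi.basisFun K m).indexEquiv (Module.Basis.mk hT hTspan)
  let A : Matrix m m R := of fun i ↦ M.col (e i)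
  suffices hTψ : LinearIndepOn L (M.map ψ).col T from hTψ.mono hST
  exact (linearIndependent_equiv e).mp <|
    hM.linearIndependent_of_map (A := A) (fun i ↦ ⟨e i, rfl⟩) φ ψ <|
      (linearIndependent_equiv e).mpr hT

end BaseChange

section SameMatroid

/-- Two families of vectors, over possibly different fields, represent the same matroid: the same
subfamilies are linearly independent. -/
def RepresentSameMatroid (K F : Type*) {ι V W : Type*} [Field K] [AddCommGroup V] [Module K V]
    [Field F] [AddCommGroup W] [Module F W] (x : ι → V) (y : ι → W) : Prop :=
  ∀ S : Set ι, LinearIndepOn K x S ↔ LinearIndepOn F y S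

namespace RepresentSameMatroid

variable {ι m K F V W : Type*} [Field K] [AddCommGroup V] [Module K V]
  [Field F] [AddCommGroup W] [Module F W]

theorem symm {x : ι → V} {y : ι → W} (h : RepresentSameMatroid K F x y) :
    RepresentSameMatroid F K y x :=
  fun S ↦ (h S).symm

theorem mem_span_image {x : ι → V} {y : ι → W} (h : RepresentSameMatroid K F x y) {j : ι}
    {S : Set ι} (hj : x j ∈ span K (x '' S)) : y j ∈ span F (y '' S) := by
  obtain ⟨T, hTS, -, hspan, hT⟩ :=
    exists_linearIndepOn_extension (linearIndepOn_empty K x) (Set.empty_subset S)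
  have hxj : x j ∈ span K (x '' T) := span_le.mpr hspan hj
  rw [hT.mem_span_iff, h, ← ((h T).mp hT).mem_span_iff] at hxj
  exact span_mono (Set.image_mono hTS) hxj

theorem comp_injective_iff {W' : Type*} [AddCommGroup W'] [Module F W'] {x : ι → V} {y : ι → W}
    {f : W →ₗ[F] W'} (hf : Function.Injective f) :
    RepresentSameMatroid K F x (f ∘ y) ↔ RepresentSameMatroid K F x y :=
  forall_congr' fun _ ↦ iff_congr .rfl (f.linearIndepOn_iff_of_injOn hf.injOn)

theorem exists_standard_basis [Finite m] {x : ι → m → K} {y : ι → W} {e : m → ι}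
    (h : RepresentSameMatroid K F x y) (hx : x ∘ e = Pi.basisFun K m) :
    ∃ c : ι → m → F, RepresentSameMatroid K F x c ∧ c ∘ e = Pi.basisFun F m := by
  have := Fintype.ofFinite m
  classical
  have he : Function.Injective e := fun i j hij ↦
    (Pi.basisFun K m).injective (by rw [← hx, Function.comp_apply, hij, Function.comp_apply])
  have hye : LinearIndependent F (y ∘ e) := by
    rw [← linearIndepOn_range_iff he, ← h, linearIndepOn_range_iff he, hx]
    exact (Pi.basisFun K m).linearIndependent
  let f := Fintype.linearCombination F (y ∘ e)
  have hf : Function.Injective f := hye.fintypeLinearCombination_injective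
  have hrange (j : ι) : ∃ v, f v = y j := by
    rw [← LinearMap.mem_range, Fintype.range_linearCombination, Set.range_comp]
    refine h.mem_span_image ?_
    rw [← Set.range_comp, hx, (Pi.basisFun K m).span_eq]
    exact mem_top
  choose c hc using hrange
  refine ⟨c, ?_, funext fun i ↦ hf (by simp [hc, f])⟩
  rwa [← comp_injective_iff hf, show f ∘ c = y from funext hc]

theorem mem_span_image_compl_singleton_iff [Finite m] {x : ι → m → K} {e : m → ι}
    (hx : x ∘ e = Pi.basisFun K m) {v : m → K} {i : m} :
    v ∈ span K (x '' (e '' {i}ᶜ)) ↔ v i = 0 := by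
  rw [← Set.image_comp, hx, (Pi.basisFun K m).mem_span_image, Set.subset_compl_singleton_iff]
  simp

theorem apply_eq_zero_iff [Finite m] {x : ι → m → K} {y : ι → m → F} {e : m → ι}
    (h : RepresentSameMatroid K F x y) (hx : x ∘ e = Pi.basisFun K m)
    (hy : y ∘ e = Pi.basisFun F m) {j : ι} {i : m} : x j i = 0 ↔ y j i = 0 := by
  rw [← mem_span_image_compl_singleton_iff hx, ← mem_span_image_compl_singleton_iff hy]
  exact ⟨h.mem_span_image, h.symm.mem_span_image⟩

theorem exists_normalized [Finite m] {x : ι → m → K} {y : ι → W} {e : m → ι}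
    (h : RepresentSameMatroid K F x y) (hx : x ∘ e = Pi.basisFun K m) (j₀ : ι) :
    ∃ c : ι → m → F, RepresentSameMatroid K F x c ∧ (∀ j i, c j i = 0 ↔ x j i = 0) ∧
      ∀ i, x j₀ i ≠ 0 → c j₀ i = 1 := by
  classical
  obtain ⟨b, hb, hbe⟩ := h.exists_standard_basis hx
  have hsupp (j : ι) (i : m) : x j i = 0 ↔ b j i = 0 := hb.apply_eq_zero_iff hx hbe
  let d (i : m) : F := if b j₀ i = 0 then 1 else (b j₀ i)⁻¹
  have hd (i : m) : d i ≠ 0 := by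
    by_cases hi : b j₀ i = 0 <;> simp [d, hi]
  let f : (m → F) ≃ₗ[F] (m → F) :=
    .piCongrRight fun i ↦ LinearEquiv.smulOfNeZero F F (d i) (hd i)
  refine ⟨f ∘ b, (comp_injective_iff (f := f.toLinearMap) f.injective).mpr hb, fun j i ↦ ?_,
    fun i hi ↦ ?_⟩
  · simp [f, hsupp, hd]
  · rw [ne_eq, hsupp] at hi
    simp [f, d, hi]

variable {R : Type*} [CommRing R] {φ : R →+* K} {M : Matrix m ι R} {y : ι → W}

theorem mem_span_image_of_map (h : RepresentSameMatroid K F (M.map φ).col y) {j : ι} {S : Set ι}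
    (hj : M.col j ∈ span R (M.col '' S)) : y j ∈ span F (y '' S) := by
  refine h.mem_span_image ?_
  have hφ := comp_mem_span_of_mem_span φ hj
  rwa [Set.image_image] at hφ

theorem exists_smul_add_smul_eq (h : RepresentSameMatroid K F (M.map φ).col y) {i j k : ι}
    {a b : R} (hk : a • M.col i + b • M.col j = M.col k) :
    ∃ a b : F, a • y i + b • y j = y k := by
  rw [← mem_span_pair, ← Set.image_pair]
  refine h.mem_span_image_of_map ?_
  rw [Set.image_pair, mem_span_pair]
  exact ⟨a, b, hk⟩

theorem exists_smul_add_smul_add_smul_eq (h : RepresentSameMatroid K F (M.map φ).col y)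
    {i j k l : ι} {a b c : R} (hl : a • M.col i + b • M.col j + c • M.col k = M.col l) :
    ∃ a b c : F, a • y i + b • y j + c • y k = y l := by
  rw [← mem_span_triple, ← Set.image_pair, ← Set.image_insert_eq]
  refine h.mem_span_image_of_map ?_
  rw [Set.image_insert_eq, Set.image_pair, mem_span_triple]
  exact ⟨a, b, c, hl⟩

end RepresentSameMatroid

end SameMatroid

/-- The ring `ℤ[ω]` with `ω ^ 2 = ω + 1`, whose units `±ω ^ k` are the nonzero elements of the
golden-mean partial field. -/
abbrev GoldenInt := QuadraticAlgebra ℤ 1 1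

/-- The lift of `matI5D5P0` to `ℤ[ω]`, with `ω` in place of `α` and signs chosen so that every
maximal minor is `0` or a unit. -/
def goldenMatrix : Matrix (Fin 5) (Fin 21) GoldenInt :=
  !![1, 0, 0, 0, 0,   1,  1,  1,  1,  0,  0,  0,  0,  0,  0,  -1, -1, -ω, -ω,  ω,     ω - 1;
     0, 1, 0, 0, 0,  -1,  0,  0,  0,  1,  1,  1,  0,  0,  0,   ω,  ω,  ω,  ω,  -ω - 1, -ω;
     0, 0, 1, 0, 0,   0, -1,  0,  0, -1,  0,  0,  1,  1,  0,  -ω, -ω, -1, -1,  1,      1;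
     0, 0, 0, 1, 0,   0,  0, -1,  0,  0, -1,  0, -1,  0,  1,   1,  0,  1,  0,  0,      0;
     0, 0, 0, 0, 1,   0,  0,  0, -1,  0,  0, -1,  0, -1, -1,   0,  1,  0,  1,  0,      0]

theorem exists_goldenInt_ringHom {K : Type*} [CommRing K] {w : K} (hw : w ^ 2 = w + 1) :
    ∃ φ : GoldenInt →+* K, φ ω = w :=
  let root : {u : K // u * u = (1 : ℤ) • 1 + (1 : ℤ) • u} :=
    ⟨w, by rw [← sq, hw, one_smul, one_smul, add_comm]⟩
  ⟨QuadraticAlgebra.lift root, by simp [root]⟩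

theorem matI5D5P0_eq_map_goldenMatrix {α : GaloisField 2 2} (hα : α ^ 2 = α + 1)
    {φ : GoldenInt →+* GaloisField 2 2} (hφ : φ ω = α) :
    matI5D5P0 α = goldenMatrix.map φ := by
  ext i j
  fin_cases i <;> fin_cases j <;>
    simp [matI5D5P0, goldenMatrix, hφ, hα, CharTwo.neg_eq, CharTwo.sub_eq_add]

theorem span_range_goldenMatrix_col : span GoldenInt (Set.range goldenMatrix.col) = ⊤ := by
  rw [eq_top_iff, ← (Pi.basisFun GoldenInt (Fin 5)).span_eq, span_le]
  rintro _ ⟨i, rfl⟩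
  refine subset_span ⟨i.castLE (by decide), ?_⟩
  rw [Pi.basisFun_apply]
  revert i
  decide

theorem isUnimodular_goldenMatrix : IsUnimodular (Set.range goldenMatrix.col) := by
  -- The columns of `I₅` are pivoted out last: with them first, the search is far larger.
  have hcheck : checkUnimodular (fun x : GoldenInt ↦ x.norm • star x) 5
      (List.ofFn goldenMatrix.col).reverse := by
    decide +kernel
  have hmem : {v | v ∈ (List.ofFn goldenMatrix.col).reverse} = Set.range goldenMatrix.col := by
    ext v
    rw [Set.mem_ofPred_eq, List.mem_reverse, List.mem_ofFn, Set.mem_range]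
  exact hmem ▸ isUnimodular_of_checkUnimodular _ hcheck

section GoldenRoot

variable {K F W : Type*} [Field K] [Field F] [AddCommGroup W] [Module F W] {φ : GoldenInt →+* K}
  {c : Fin 21 → Fin 5 → F}

theorem map_goldenMatrix_col_comp_castLE (φ : GoldenInt →+* K) :
    (goldenMatrix.map φ).col ∘ Fin.castLE (by decide) = Pi.basisFun K (Fin 5) := by
  ext i j
  fin_cases i <;> fin_cases j <;> simp [goldenMatrix]

theorem exists_sq_eq_add_one_of_scalar_relations {x₀ x₁ u l m n i j q : F} (hx₁ : x₁ ≠ 0)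
    (hl : l ≠ 0) (hq : q ≠ 0) (h₁ : m * (u * x₀) + n = l * x₀) (h₂ : n = l * x₁)
    (h₃ : q * n = i * x₁) (h₄ : q * (n - m * (u * x₁)) = i * x₀ + j * (u * x₀))
    (h₅ : q * (n - m * (u * x₁)) = -(j * (u * x₁))) :
    ∃ z : F, z ^ 2 = z + 1 := by
  subst h₂
  have hi : i = q * l := mul_right_cancel₀ hx₁ (by linear_combination -h₃)
  have hj : j * u = q * (m * u - l) := mul_right_cancel₀ hx₁ (by linear_combination h₅)
  have hm : m * u * x₀ = (l - m * u) * x₁ := mul_left_cancel₀ hq <| by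
    linear_combination -h₄ - x₀ * hi - x₀ * hj
  have hquad : x₀ ^ 2 = x₁ * (x₀ + x₁) := mul_left_cancel₀ hl <| by
    linear_combination -(x₀ + x₁) * h₁ + x₀ * hm
  refine ⟨x₀ / x₁, ?_⟩
  field_simp
  exact hquad

theorem exists_col_six_eq (hc : RepresentSameMatroid K F (goldenMatrix.map φ).col c)
    (hzero : ∀ i j, goldenMatrix i j = 0 → c j i = 0) (hone : c 15 = ![1, 1, 1, 1, 0]) :
    ∃ u, c 6 = ![u * c 5 0, 0, -(u * c 5 1), 0, 0] := by
  obtain ⟨s, t, k, h9⟩ : ∃ s t k : F, s • c 0 + t • c 3 + k • c 15 = c 9 :=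
    hc.exists_smul_add_smul_add_smul_eq (a := ω - 1) (b := 1 - ω) (c := ω - 1) (by decide)
  obtain ⟨u, v, h6⟩ : ∃ u v : F, u • c 5 + v • c 9 = c 6 :=
    hc.exists_smul_add_smul_eq (a := 1) (b := 1) (by decide)
  have h9₁ : k = c 9 1 := by simpa [hzero, hone, goldenMatrix] using congrFun h9 1
  have h9₂ : k = c 9 2 := by simpa [hzero, hone, goldenMatrix] using congrFun h9 2
  have h6₀ : u * c 5 0 = c 6 0 := by simpa [hzero, goldenMatrix] using congrFun h6 0
  have h6₁ : u * c 5 1 + v * c 9 1 = 0 := by simpa [hzero, goldenMatrix] using congrFun h6 1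
  have h6₂ : v * c 9 2 = c 6 2 := by simpa [hzero, goldenMatrix] using congrFun h6 2
  have h6₂' : c 6 2 = -(u * c 5 1) := by linear_combination h6₁ - h6₂ + v * h9₁ - v * h9₂
  refine ⟨u, funext fun i ↦ ?_⟩
  fin_cases i <;> simp [hzero, goldenMatrix, h6₀, h6₂']

theorem exists_col_seventeen_eq (hc : RepresentSameMatroid K F (goldenMatrix.map φ).col c)
    (hzero : ∀ i j, goldenMatrix i j = 0 → c j i = 0) :
    ∃ l m n : F, m • c 6 + n • c 15 = c 17 ∧ c 17 0 = l * c 5 0 ∧ c 17 1 = l * c 5 1 := by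
  obtain ⟨m, n, h17⟩ : ∃ m n : F, m • c 6 + n • c 15 = c 17 :=
    hc.exists_smul_add_smul_eq (a := 1 - ω) (b := 1) (by decide)
  obtain ⟨l, s, t, h17'⟩ : ∃ l s t : F, l • c 5 + s • c 2 + t • c 3 = c 17 :=
    hc.exists_smul_add_smul_add_smul_eq (a := -ω) (b := -1) (c := 1) (by decide)
  refine ⟨l, m, n, h17, ?_, ?_⟩
  · simpa [hzero, goldenMatrix] using (congrFun h17' 0).symm
  · simpa [hzero, goldenMatrix] using (congrFun h17' 1).symm

theorem exists_col_twenty_eq (hc : RepresentSameMatroid K F (goldenMatrix.map φ).col c)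
    (hzero : ∀ i j, goldenMatrix i j = 0 → c j i = 0) (hone : c 15 = ![1, 1, 1, 1, 0]) :
    ∃ i j q : F, i • c 5 + j • c 6 = c 20 ∧ c 20 0 = c 20 2 ∧
      c 20 1 = q * c 17 1 ∧ c 20 2 = q * c 17 2 := by
  obtain ⟨i, j, h⟩ : ∃ i j : F, i • c 5 + j • c 6 = c 20 :=
    hc.exists_smul_add_smul_eq (a := ω) (b := -1) (by decide)
  obtain ⟨s, t, f, h'⟩ : ∃ s t f : F, s • c 1 + t • c 3 + f • c 15 = c 20 :=
    hc.exists_smul_add_smul_add_smul_eq (a := 1 - ω) (b := ω - 1) (c := 1 - ω) (by decide)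
  obtain ⟨p, r, q, h''⟩ : ∃ p r q : F, p • c 0 + r • c 3 + q • c 17 = c 20 :=
    hc.exists_smul_add_smul_add_smul_eq (a := -1) (b := 1) (c := -1) (by decide)
  have h'₀ : f = c 20 0 := by simpa [hzero, hone, goldenMatrix] using congrFun h' 0
  have h'₂ : f = c 20 2 := by simpa [hzero, hone, goldenMatrix] using congrFun h' 2
  refine ⟨i, j, q, h, h'₀.symm.trans h'₂, ?_, ?_⟩
  · simpa [hzero, goldenMatrix] using (congrFun h'' 1).symm
  · simpa [hzero, goldenMatrix] using (congrFun h'' 2).symm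

theorem exists_sq_eq_add_one_of_representSameMatroid {y : Fin 21 → W}
    (h : RepresentSameMatroid K F (goldenMatrix.map φ).col y) : ∃ z : F, z ^ 2 = z + 1 := by
  obtain ⟨c, hc, hc_zero, hc_one⟩ := h.exists_normalized (map_goldenMatrix_col_comp_castLE φ) 15
  have hω : φ ω ≠ 0 := ((IsUnit.of_mul_eq_one (ω - 1) (by decide)).map φ).ne_zero
  have hzero (i j) (hij : goldenMatrix i j = 0) : c j i = 0 := by simp [hc_zero, hij]
  have hone : c 15 = ![1, 1, 1, 1, 0] := by
    ext i
    fin_cases i <;> simp [hzero, hc_one, goldenMatrix, hω]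
  have hne5 : c 5 1 ≠ 0 := by simp [hc_zero, goldenMatrix]
  have hne17 : c 17 1 ≠ 0 := by simp [hc_zero, goldenMatrix, hω]
  have hne20 : c 20 1 ≠ 0 := by simp [hc_zero, goldenMatrix, hω]
  obtain ⟨u, h6⟩ := exists_col_six_eq hc hzero hone
  obtain ⟨l, m, n, h17, h17₀, h17₁⟩ := exists_col_seventeen_eq hc hzero
  obtain ⟨i, j, q, h20, h20₀₂, h20₁, h20₂⟩ := exists_col_twenty_eq hc hzero hone
  rw [h17₁, mul_ne_zero_iff] at hne17
  rw [h20₁, mul_ne_zero_iff] at hne20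
  have hzero5 : c 5 2 = 0 := hzero 2 5 (by decide)
  simp only [← h17, ← h20, h6, hone, hzero5, Pi.add_apply, Pi.smul_apply, smul_eq_mul, cons_val,
    mul_one, mul_zero, zero_add, add_zero] at h17₀ h17₁ h20₀₂ h20₁ h20₂
  exact exists_sq_eq_add_one_of_scalar_relations (u := u) (m := m) (i := i) (j := j)
    hne5 hne17.1 hne20.1 h17₀ h17₁ (by linear_combination -h20₁)
    (by linear_combination -h20₂ - h20₀₂) (by linear_combination -h20₂)

end GoldenRoot

theorem stmt_13_general {K : Type*} [Field K] (φ : GoldenInt →+* K) (F : Type*) [Field F] :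
    RealizesColumnMatroid (goldenMatrix.map φ) F ↔ ∃ z : F, z ^ 2 = z + 1 := by
  constructor
  · rintro ⟨n, B, hB⟩
    exact exists_sq_eq_add_one_of_representSameMatroid (y := B.col) fun S ↦ (hB S).symm
  · rintro ⟨z, hz⟩
    obtain ⟨ψ, -⟩ := exists_goldenInt_ringHom hz
    exact ⟨5, goldenMatrix.map ψ, fun S ↦
      ⟨isUnimodular_goldenMatrix.linearIndepOn_map_col span_range_goldenMatrix_col ψ φ,
        isUnimodular_goldenMatrix.linearIndepOn_map_col span_range_goldenMatrix_col φ ψ⟩⟩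

/-- A field `F` realizes the column matroid of `[I₅ | D₅ | P₀]` iff `F` contains a root
of `x² − x − 1` (the universal partial field of this matroid is the golden-mean partial
field `𝔾`). -/
theorem stmt_13 (α : GaloisField 2 2) (hα : α ^ 2 = α + 1) (F : Type*) [Field F] :
    RealizesColumnMatroid (matI5D5P0 α) F ↔ ∃ z : F, z ^ 2 = z + 1 := by
  obtain ⟨φ, hφ⟩ := exists_goldenInt_ringHom hα
  rw [matI5D5P0_eq_map_goldenMatrix hα hφ]
  exact stmt_13_general φ F
end
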